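/- Suppose g(r) = o(e^{-c r}) as r → ∞ for some c > 0, and fix γ > 0. Let L_n(γ) be the length (in the toroidal metric) of the longest edge of the graph G_n(r̂_n(γ)) (with L_n(γ) := 0 if there are no edges). Then almost surely, limsup_{n→∞} L_n(γ)/(r̂_n(γ)·log n) ≤ 1/c. -/

import Mathlib

open MeasureTheory ProbabilityTheory Filter Set

noncomputable section

namespace RCM

/-- The toroidal metric on the unit cube. -/
def torusDist {d : ℕ} (x y : EuclideanSpace ℝ (Fin d)) : ℝ :=
  ⨅ z : Fin d → ℤ, ‖x - y - (WithLp.equiv 2 (Fin d → ℝ)).symm (fun i => (z i : ℝ))‖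

/-- The half-open unit cube `S = (-1/2, 1/2]^d`. -/
def cube (d : ℕ) : Set (EuclideanSpace ℝ (Fin d)) :=
  {x | ∀ i, x i ∈ Set.Ioc (-(1/2) : ℝ) (1/2)}

/-- The random connection model: i.i.d. uniform points `X`, coupled Poisson counts `N`,
i.i.d. uniform edge variables `U`, with the three families mutually independent, and a
non-increasing connection function `g : [0,∞) → [0,1]` with finite positive integral `α`. -/
structure Model (d : ℕ) {Ω : Type*} [MeasurableSpace Ω] (P : Measure Ω) where
  g : ℝ → ℝ
  α : ℝ
  X : ℕ → Ω → EuclideanSpace ℝ (Fin d)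
  N : ℕ → Ω → ℕ
  U : ℕ → ℕ → Ω → ℝ
  g_antitone : AntitoneOn g (Set.Ici 0)
  g_mem : ∀ r : ℝ, 0 ≤ r → g r ∈ Set.Icc (0 : ℝ) 1
  g_integrable : MeasureTheory.Integrable (fun x : EuclideanSpace ℝ (Fin d) => g ‖x‖)
  α_def : α = ∫ x : EuclideanSpace ℝ (Fin d), g ‖x‖
  α_pos : 0 < α
  X_meas : ∀ i, Measurable (X i)
  X_unif : ∀ i : ℕ, 1 ≤ i → Measure.map (X i) P = volume.restrict (cube d)
  X_indep : iIndepFun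
    (fun i : {i : ℕ // 1 ≤ i} => X i) P
  N_meas : ∀ n, Measurable (N n)
  N_mono : ∀ ω, Monotone fun n => N n ω
  N_poisson : ∀ n k : ℕ,
    P {ω | N n ω = k} = ENNReal.ofReal (Real.exp (-(n : ℝ)) * (n : ℝ) ^ k / k.factorial)
  U_meas : ∀ i j, Measurable (U i j)
  U_unif : ∀ i j : ℕ, 1 ≤ i → i < j →
    Measure.map (U i j) P = volume.restrict (Set.Icc (0 : ℝ) 1)
  U_indep : iIndepFun
    (fun p : {p : ℕ × ℕ // 1 ≤ p.1 ∧ p.1 < p.2} => U p.1.1 p.1.2) P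
  families_indep : iIndep
    (![MeasurableSpace.comap (fun ω => fun i : ℕ => X i ω) inferInstance,
       MeasurableSpace.comap (fun ω => fun n : ℕ => N n ω) inferInstance,
       MeasurableSpace.comap (fun ω => fun p : ℕ × ℕ => U p.1 p.2 ω) inferInstance]) P

variable {d : ℕ} {Ω : Type*} [MeasurableSpace Ω] {P : Measure Ω}

/-- Adjacency in the graph `G_n(r)`: vertices `1 ≤ i,j ≤ N_n` are joined iff
`U_{ij} ≤ g(dist(X_i,X_j)/r)`. -/
def adj (M : Model d P) (n : ℕ) (r : ℝ) (ω : Ω) (i j : ℕ) : Prop :=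
  i ≠ j ∧ 1 ≤ i ∧ 1 ≤ j ∧ i ≤ M.N n ω ∧ j ≤ M.N n ω ∧
    M.U (min i j) (max i j) ω ≤ M.g (torusDist (M.X i ω) (M.X j ω) / r)

/-- The degree of vertex `i` in `G_n(r)`. -/
def deg (M : Model d P) (n : ℕ) (r : ℝ) (ω : Ω) (i : ℕ) : ℕ :=
  {j : ℕ | adj M n r ω i j}.ncard

/-- `W_n(r)`, the number of isolated vertices of `G_n(r)`. -/
def isolatedCount (M : Model d P) (n : ℕ) (r : ℝ) (ω : Ω) : ℕ :=
  {i : ℕ | 1 ≤ i ∧ i ≤ M.N n ω ∧ deg M n r ω i = 0}.ncard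


/-- `r̂_n(γ)` defined by `r̂_n(γ)^d = γ log n / (α n)`. -/
def rhat (M : Model d P) (γ : ℝ) (n : ℕ) : ℝ :=
  (γ * Real.log n / (M.α * n)) ^ ((1 : ℝ) / d)

/-- `d_n`, the critical parameter for absence of isolated nodes. -/
def critRadius (M : Model d P) (n : ℕ) (ω : Ω) : ℝ :=
  sInf {r : ℝ | 0 < r ∧ isolatedCount M n r ω = 0}

/-- The maximum vertex degree `Δ_n` of `G_n(r)`. -/
def maxDeg (M : Model d P) (n : ℕ) (r : ℝ) (ω : Ω) : ℕ :=
  (Finset.Icc 1 (M.N n ω)).sup (deg M n r ω)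

/-- The minimum vertex degree `δ_n` of `G_n(r)`. -/
def minDeg (M : Model d P) (n : ℕ) (r : ℝ) (ω : Ω) : ℕ :=
  sInf {k : ℕ | ∃ i, 1 ≤ i ∧ i ≤ M.N n ω ∧ deg M n r ω i = k}

/-- The length (toroidal metric) of the longest edge of `G_n(r)` (`0` if there are no edges). -/
def longestEdge (M : Model d P) (n : ℕ) (r : ℝ) (ω : Ω) : ℝ :=
  sSup ({0} ∪ {t : ℝ | ∃ i j, adj M n r ω i j ∧ t = torusDist (M.X i ω) (M.X j ω)})

/-- Connectivity of `G_n(r)`: any two vertices are joined by a path. -/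
def connectedGraph (M : Model d P) (n : ℕ) (r : ℝ) (ω : Ω) : Prop :=
  ∀ i j : ℕ, 1 ≤ i → i ≤ M.N n ω → 1 ≤ j → j ≤ M.N n ω →
    Relation.ReflTransGen (adj M n r ω) i j

/-- `H(x) = 1 - x + x log x` (with `H(0) = 1`, since `log 0 = 0` in Lean). -/
def H (x : ℝ) : ℝ := 1 - x + x * Real.log x

/-- The inverse of the restriction of `H` to `[1, ∞)`. -/
def Hplusinv (y : ℝ) : ℝ := sInf {x : ℝ | 1 ≤ x ∧ y ≤ H x}

/-- The inverse of the restriction of `H` to `[0, 1]`. -/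
def Hminusinv (y : ℝ) : ℝ := sInf {x : ℝ | 0 ≤ x ∧ H x ≤ y}

/-- The standard normal distribution function. -/
def stdNormalCDF (x : ℝ) : ℝ :=
  ∫ t in Set.Iic x, Real.exp (-t ^ 2 / 2) / Real.sqrt (2 * Real.pi)

/-!
Choose `b < c`. As `g s ≤ K exp (-(c s))`, beyond `s = t` one has
`g s ≤ K exp (-(b t)) exp (-((c - b) s))`, and integrating the second exponential over the torus
shows that a given pair of points is joined at scale `r` by an edge longer than `t r` with
probability `O(exp (-(b t)) r ^ d)`. For `t = a log n` and `r = r̂_n` a union bound over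
the pairs among the first `4 n` points gives `O(n ^ (1 - a b) log n)`, which decays polynomially as
soon as `1 / b < a`.

This is only summable along a sparse sequence such as `k ^ m`. Between two consecutive terms
`q ≤ n` of ratio close to `1`, `r̂_n ≤ r̂_q` and the monotonicity of `g` turn every edge of
`G_n(r̂_n)` into a pair that would be joined at scale `r̂_q`, while `r̂_q log q` is hardly larger
than `r̂_n log n`; since `N_n ≤ 2 n ≤ 4 q` eventually, the bound at `q` covers these pairs.
-/

section Limits

variable {β : Type*} [MeasurableSpace β] {μ : Measure β}

lemma ae_limsup_le_of_forall_gt {f : ℕ → β → ℝ} {a : ℝ} (hf : ∀ n x, 0 ≤ f n x)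
    (h : ∀ b, a < b → ∀ᵐ x ∂μ, ∀ᶠ n in atTop, f n x ≤ b) :
    ∀ᵐ x ∂μ, limsup (fun n => f n x) atTop ≤ a := by
  obtain ⟨b, -, hab, hb⟩ := exists_seq_strictAnti_tendsto a
  filter_upwards [ae_all_iff.2 fun p => h (b p) (hab p)] with x hx
  have hcobdd : IsCoboundedUnder (· ≤ ·) atTop fun n => f n x :=
    isCoboundedUnder_le_of_le atTop fun n => hf n x
  exact ge_of_tendsto' hb fun p => limsup_le_of_le hcobdd (hx p)

lemma tendsto_nthRoot_atTop {m : ℕ} (hm : m ≠ 0) : Tendsto (Nat.nthRoot m) atTop atTop :=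
  tendsto_atTop.2 fun k => (eventually_ge_atTop (k ^ m)).mono fun _ => (Nat.le_nthRoot_iff hm).2

lemma eventually_add_one_pow_le (m : ℕ) {l : ℝ} (hl : 1 < l) :
    ∀ᶠ k : ℕ in atTop, ((k : ℝ) + 1) ^ m ≤ l * (k : ℝ) ^ m := by
  have h : Tendsto (fun k : ℕ => (1 + 1 / (k : ℝ)) ^ m) atTop (nhds 1) := by
    simpa using (tendsto_one_div_atTop_nhds_zero_nat (𝕜 := ℝ)).const_add 1 |>.pow m
  filter_upwards [h.eventually_le_const hl, eventually_gt_atTop 0] with k hk hk0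
  calc ((k : ℝ) + 1) ^ m = (1 + 1 / (k : ℝ)) ^ m * (k : ℝ) ^ m := by
        rw [← mul_pow, add_mul, one_mul, one_div_mul_cancel (by positivity)]
    _ ≤ l * (k : ℝ) ^ m := by gcongr

lemma exists_ae_eventually_notMem_pow [IsFiniteMeasure μ] {s : ℕ → Set β} {ε : ℝ} (hε : 0 < ε)
    (hs : (fun n => μ.real (s n)) =O[atTop] fun n : ℕ => (n : ℝ) ^ (-ε)) :
    ∃ m ≠ 0, ∀ᵐ x ∂μ, ∀ᶠ k in atTop, x ∉ s (k ^ m) := by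
  obtain ⟨m, hm⟩ := exists_nat_gt (1 / ε)
  have hmε : 1 < m * ε := by rwa [div_lt_iff₀ hε] at hm
  have hm0 : m ≠ 0 := by
    rintro rfl
    norm_num at hmε
  have hsum : Summable fun k => μ.real (s (k ^ m)) := by
    refine summable_of_isBigO_nat (Real.summable_nat_rpow.2 (show -(m * ε) < -1 by linarith))
      ((hs.comp_tendsto (tendsto_pow_atTop hm0)).congr_right fun k => ?_)
    simp only [Function.comp_apply]
    rw [Nat.cast_pow, ← Real.rpow_natCast, ← Real.rpow_mul k.cast_nonneg, mul_neg]
  refine ⟨m, hm0, ae_eventually_notMem ?_⟩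
  simpa only [ofReal_measureReal (measure_ne_top μ _)] using hsum.tsum_ofReal_ne_top

-- Borel–Cantelli only applies along the sparse sequence `q = k ^ m`, but consecutive terms of it
-- have ratio tending to `1`.
lemma ae_eventually_exists_notMem_of_isBigO [IsFiniteMeasure μ] {s : ℕ → Set β} {ε l : ℝ}
    (hε : 0 < ε) (hl : 1 < l)
    (hs : (fun n => μ.real (s n)) =O[atTop] fun n : ℕ => (n : ℝ) ^ (-ε)) :
    ∀ᵐ x ∂μ, ∀ᶠ n : ℕ in atTop, ∃ q ≤ n, (n : ℝ) ≤ l * q ∧ x ∉ s q := by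
  obtain ⟨m, hm, hnot⟩ := exists_ae_eventually_notMem_pow hε hs
  filter_upwards [hnot] with x hx
  have hroot := tendsto_nthRoot_atTop hm
  filter_upwards [hroot.eventually hx, hroot.eventually (eventually_add_one_pow_le m hl)]
    with n hn hnl
  refine ⟨Nat.nthRoot m n ^ m, Nat.pow_nthRoot_le_iff.2 (Or.inl hm), ?_, hn⟩
  rw [Nat.cast_pow]
  refine le_trans ?_ hnl
  exact_mod_cast (Nat.lt_pow_nthRoot_add_one hm n).le

lemma natCast_rpow_mul_log_isBigO_rpow {u v : ℝ} (huv : u < v) :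
    (fun n : ℕ => (n : ℝ) ^ u * Real.log n) =O[atTop] fun n : ℕ => (n : ℝ) ^ v := by
  have hlog : (fun n : ℕ => Real.log n) =O[atTop] fun n : ℕ => (n : ℝ) ^ (v - u) :=
    ((isLittleO_log_rpow_atTop (sub_pos.2 huv)).comp_tendsto tendsto_natCast_atTop_atTop).isBigO
  refine ((Asymptotics.isBigO_refl _ _).mul hlog).congr' .rfl ?_
  filter_upwards [eventually_gt_atTop 0] with n hn
  rw [← Real.rpow_add (by positivity), add_sub_cancel]

end Limits

section Poisson

open scoped NNReal

lemma lintegral_pow_poissonMeasure (r : ℝ≥0) {x : ℝ} (hx : 0 ≤ x) :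
    ∫⁻ k, ENNReal.ofReal (x ^ k) ∂poissonMeasure r = ENNReal.ofReal (Real.exp (r * (x - 1))) := by
  have hsum : HasSum (fun k : ℕ => Real.exp (-r) * r ^ k / k.factorial * x ^ k)
      (Real.exp (r * (x - 1))) := by
    convert! (NormedSpace.expSeries_div_hasSum_exp (r * x : ℝ)).mul_left (Real.exp (-r)) using 1
    · ext k
      ring
    · rw [← Real.exp_eq_exp_ℝ, ← Real.exp_add]
      ring_nf
  rw [lintegral_countable', ← hsum.tsum_eq,
    ENNReal.ofReal_tsum_of_nonneg (fun k => by positivity) hsum.summable]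
  refine tsum_congr fun k => ?_
  rw [poissonMeasure_singleton, mul_comm, ← ENNReal.ofReal_mul (by positivity)]

lemma poissonMeasure_mul_le_le_exp_neg_H (r : ℝ≥0) {x : ℝ} (hx : 1 ≤ x) :
    poissonMeasure r {k | x * r ≤ k} ≤ ENNReal.ofReal (Real.exp (-(r * H x))) := by
  have hx0 : 0 < x := one_pos.trans_le hx
  have hsubset : {k : ℕ | x * r ≤ k} ⊆
      {k | ENNReal.ofReal (x ^ (x * r : ℝ)) ≤ ENNReal.ofReal (x ^ k)} := fun k hk =>
    ENNReal.ofReal_le_ofReal <| by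
      rw [← Real.rpow_natCast]
      exact Real.rpow_le_rpow_of_exponent_le hx hk
  have hpos : 0 < x ^ (x * r : ℝ) := Real.rpow_pos_of_pos hx0 _
  calc poissonMeasure r {k | x * r ≤ k}
      ≤ (∫⁻ k, ENNReal.ofReal (x ^ k) ∂poissonMeasure r) / ENNReal.ofReal (x ^ (x * r : ℝ)) :=
        (measure_mono hsubset).trans <| meas_ge_le_lintegral_div (by fun_prop)
          (ENNReal.ofReal_pos.2 hpos).ne' ENNReal.ofReal_ne_top
    _ = ENNReal.ofReal (Real.exp (-(r * H x))) := by
        rw [lintegral_pow_poissonMeasure r hx0.le, ← ENNReal.ofReal_div_of_pos hpos,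
          Real.rpow_def_of_pos hx0, ← Real.exp_sub, H]
        ring_nf

end Poisson

section ExponentialDecay

lemma exists_forall_nonneg_le_mul_exp_neg {f : ℝ → ℝ} {c : ℝ} (hc : 0 ≤ c)
    (hf : ∀ s, 0 ≤ s → f s ≤ 1) (h : f =O[atTop] fun s => Real.exp (-(c * s))) :
    ∃ K, 0 ≤ K ∧ ∀ s, 0 ≤ s → f s ≤ K * Real.exp (-(c * s)) := by
  obtain ⟨K, hK⟩ := h.bound
  obtain ⟨s₀, hs₀⟩ := eventually_atTop.1 hK
  refine ⟨max K (Real.exp (c * s₀)), by positivity, fun s hs => ?_⟩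
  rcases le_total s₀ s with hle | hle
  · calc f s ≤ K * Real.exp (-(c * s)) := by
          simpa [Real.norm_eq_abs, abs_of_pos, Real.exp_pos] using (le_abs_self _).trans (hs₀ s hle)
      _ ≤ max K (Real.exp (c * s₀)) * Real.exp (-(c * s)) := by
          gcongr
          exact le_max_left _ _
  · calc f s ≤ Real.exp (c * s₀) * Real.exp (-(c * s)) := by
          rw [← Real.exp_add]
          refine (hf s hs).trans (Real.one_le_exp ?_)
          linarith [mul_le_mul_of_nonneg_left hle hc]
      _ ≤ max K (Real.exp (c * s₀)) * Real.exp (-(c * s)) := by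
          gcongr
          exact le_max_right _ _

variable {E : Type*} [NormedAddCommGroup E] [NormedSpace ℝ E] [FiniteDimensional ℝ E]
  [MeasurableSpace E] [BorelSpace E] (μ : Measure E) [μ.IsAddHaarMeasure]

-- Up to a factor, the integral is the volume of the unit ball, which does not vanish.
lemma integrable_exp_neg_norm : Integrable (fun x : E => Real.exp (-‖x‖)) μ := by
  refine .of_integral_ne_zero fun hzero => ?_
  have hball := measure_unitBall_eq_integral_div_gamma μ one_pos
  simp only [Real.rpow_one, hzero, zero_div, ENNReal.ofReal_zero] at hball
  exact (Metric.measure_ball_pos μ 0 one_pos).ne' hball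

lemma lintegral_exp_neg_norm_sub_div {ρ : ℝ} (hρ : 0 < ρ) (v : E) :
    ∫⁻ x, ENNReal.ofReal (Real.exp (-(‖x - v‖ / ρ))) ∂μ =
      ENNReal.ofReal (ρ ^ Module.finrank ℝ E * ∫ x, Real.exp (-‖x‖) ∂μ) := by
  have hscale (x : E) : Real.exp (-(‖x‖ / ρ)) = Real.exp (-‖ρ⁻¹ • x‖) := by
    rw [norm_smul, norm_inv, Real.norm_of_nonneg hρ.le, div_eq_inv_mul]
  rw [lintegral_sub_right_eq_self (fun x => ENNReal.ofReal (Real.exp (-(‖x‖ / ρ)))) v]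
  simp_rw [hscale]
  rw [← ofReal_integral_eq_lintegral_ofReal
      ((integrable_exp_neg_norm μ).comp_smul (inv_ne_zero hρ.ne'))
      (ae_of_all _ fun _ => by positivity),
    Measure.integral_comp_inv_smul_of_nonneg μ (fun x => Real.exp (-‖x‖)) hρ.le, smul_eq_mul]

end ExponentialDecay

section Torus

/-- The vector of `ℤ^d ⊂ ℝ^d` with coordinates `z`; the infimum in `torusDist` runs over these
translations. -/
def intVector (z : Fin d → ℤ) : EuclideanSpace ℝ (Fin d) :=
  WithLp.toLp 2 fun i => (z i : ℝ)

/-- The translations in `{-1, 0, 1}^d`, among which the one realising the toroidal distance between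
two points of the cube is found. -/
def neighborShifts (d : ℕ) : Finset (Fin d → ℤ) := Fintype.piFinset fun _ => Finset.Icc (-1) 1

lemma card_neighborShifts (d : ℕ) : (neighborShifts d).card = 3 ^ d := by
  simp [neighborShifts]

lemma torusDist_nonneg (x y : EuclideanSpace ℝ (Fin d)) : 0 ≤ torusDist x y :=
  Real.iInf_nonneg fun _ => norm_nonneg _

lemma measurable_torusDist :
    Measurable fun p : EuclideanSpace ℝ (Fin d) × EuclideanSpace ℝ (Fin d) =>
      torusDist p.1 p.2 :=
  .iInf fun _ => by fun_prop

lemma measurableSet_cube : MeasurableSet (cube d) := by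
  simp only [cube, ofPred_forall]
  exact .iInter fun i => measurableSet_Ioc.preimage (by fun_prop)

lemma norm_sub_sub_round_le_torusDist (x y : EuclideanSpace ℝ (Fin d)) :
    ‖x - y - intVector fun i => round (x i - y i)‖ ≤ torusDist x y := by
  refine le_ciInf fun z => ?_
  rw [EuclideanSpace.norm_eq, EuclideanSpace.norm_eq]
  gcongr with i
  simpa [intVector] using round_le (x i - y i) (z i)

lemma round_sub_mem_neighborShifts {x y : EuclideanSpace ℝ (Fin d)} (hx : x ∈ cube d)
    (hy : y ∈ cube d) : (fun i => round (x i - y i)) ∈ neighborShifts d := by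
  rw [neighborShifts, Fintype.mem_piFinset]
  intro i
  obtain ⟨hx₁, hx₂⟩ := hx i
  obtain ⟨hy₁, hy₂⟩ := hy i
  rw [Finset.mem_Icc, round_eq, Int.le_floor, ← Int.lt_add_one_iff, Int.floor_lt]
  push_cast
  constructor <;> linarith

lemma lintegral_cube_exp_neg_torusDist_div_le {y : EuclideanSpace ℝ (Fin d)} (hy : y ∈ cube d)
    {ρ : ℝ} (hρ : 0 < ρ) :
    ∫⁻ x in cube d, ENNReal.ofReal (Real.exp (-(torusDist x y / ρ))) ≤
      ENNReal.ofReal (3 ^ d * (ρ ^ d * ∫ x : EuclideanSpace ℝ (Fin d), Real.exp (-‖x‖))) := by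
  calc ∫⁻ x in cube d, ENNReal.ofReal (Real.exp (-(torusDist x y / ρ)))
      ≤ ∫⁻ x in cube d, ∑ z ∈ neighborShifts d,
          ENNReal.ofReal (Real.exp (-(‖x - (y + intVector z)‖ / ρ))) := by
        refine setLIntegral_mono (by fun_prop) fun x hx => ?_
        refine le_trans ?_ (Finset.single_le_sum_of_canonicallyOrdered
          (round_sub_mem_neighborShifts hx hy))
        rw [← sub_sub]
        gcongr
        exact norm_sub_sub_round_le_torusDist x y
    _ ≤ ∑ z ∈ neighborShifts d,
          ∫⁻ x, ENNReal.ofReal (Real.exp (-(‖x - (y + intVector z)‖ / ρ))) := by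
        rw [← lintegral_finsetSum _ fun z _ => by fun_prop]
        exact setLIntegral_le_lintegral _ _
    _ = _ := by
        simp_rw [lintegral_exp_neg_norm_sub_div volume hρ]
        rw [Finset.sum_const, card_neighborShifts, finrank_euclideanSpace_fin, nsmul_eq_mul,
          ENNReal.ofReal_mul (p := 3 ^ d) (by positivity), ENNReal.ofReal_pow (by positivity),
          ENNReal.ofReal_ofNat, Nat.cast_pow, Nat.cast_ofNat]

lemma lintegral_exp_neg_torusDist_div_le [IsProbabilityMeasure P]
    {X Y : Ω → EuclideanSpace ℝ (Fin d)} (hX : HasLaw X (volume.restrict (cube d)) P)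
    (hY : HasLaw Y (volume.restrict (cube d)) P) (hXY : IndepFun X Y P) {ρ : ℝ} (hρ : 0 < ρ) :
    ∫⁻ ω, ENNReal.ofReal (Real.exp (-(torusDist (X ω) (Y ω) / ρ))) ∂P ≤
      ENNReal.ofReal (3 ^ d * (ρ ^ d * ∫ x : EuclideanSpace ℝ (Fin d), Real.exp (-‖x‖))) := by
  have : IsProbabilityMeasure (volume.restrict (cube d)) := hX.isProbabilityMeasure_iff.1 ‹_›
  have hmeas : Measurable fun p : EuclideanSpace ℝ (Fin d) × EuclideanSpace ℝ (Fin d) =>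
      ENNReal.ofReal (Real.exp (-(torusDist p.1 p.2 / ρ))) := by
    have := measurable_torusDist (d := d)
    fun_prop
  rw [(hXY.hasLaw_prod hX hY).lintegral_comp (f := fun p => ENNReal.ofReal
    (Real.exp (-(torusDist p.1 p.2 / ρ)))) hmeas.aemeasurable, lintegral_prod_symm' _ hmeas]
  refine (setLIntegral_mono' measurableSet_cube fun y hy =>
    lintegral_cube_exp_neg_torusDist_div_le hy hρ).trans ?_
  rw [lintegral_const, measure_univ, mul_one]

end Torus

lemma measure_le_comp_le_lintegral_ofReal {β : Type*} [MeasurableSpace β] [IsFiniteMeasure P]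
    {U : Ω → ℝ} {Z : Ω → β} (hUZ : IndepFun U Z P)
    (hU : HasLaw U (volume.restrict (Icc 0 1)) P) (hZ : AEMeasurable Z P) {h : β → ℝ}
    (hh : Measurable h) :
    P {ω | U ω ≤ h (Z ω)} ≤ ∫⁻ ω, ENNReal.ofReal (h (Z ω)) ∂P := by
  have hset : MeasurableSet {p : ℝ × β | p.1 ≤ h p.2} :=
    measurableSet_le measurable_fst (hh.comp measurable_snd)
  have hfiber (v : ℝ) : volume.restrict (Icc 0 1) (Iic v) ≤ ENNReal.ofReal v := by
    rw [Measure.restrict_apply measurableSet_Iic]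
    exact (measure_mono fun x hx => ⟨hx.2.1, hx.1⟩ : _ ≤ volume (Icc 0 v)).trans_eq (by simp)
  calc P {ω | U ω ≤ h (Z ω)}
      = ((volume.restrict (Icc 0 1)).prod (P.map Z)) {p | p.1 ≤ h p.2} :=
        (hUZ.hasLaw_prod hU ⟨hZ, rfl⟩).measure_eq hset
    _ ≤ ∫⁻ z, ENNReal.ofReal (h z) ∂P.map Z := by
        rw [Measure.prod_apply_symm hset]
        exact lintegral_mono fun z => hfiber (h z)
    _ = ∫⁻ ω, ENNReal.ofReal (h (Z ω)) ∂P := lintegral_map' (by fun_prop) hZ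

section Law

lemma hasLaw_X (M : Model d P) {i : ℕ} (hi : 1 ≤ i) :
    HasLaw (M.X i) (volume.restrict (cube d)) P :=
  ⟨(M.X_meas i).aemeasurable, M.X_unif i hi⟩

lemma hasLaw_U (M : Model d P) {i j : ℕ} (hi : 1 ≤ i) (hij : i < j) :
    HasLaw (M.U i j) (volume.restrict (Icc 0 1)) P :=
  ⟨(M.U_meas i j).aemeasurable, M.U_unif i j hi hij⟩

lemma hasLaw_N (M : Model d P) (n : ℕ) : HasLaw (M.N n) (poissonMeasure n) P := by
  refine ⟨(M.N_meas n).aemeasurable, Measure.ext_of_singleton fun k => ?_⟩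
  rw [Measure.map_apply (M.N_meas n) (measurableSet_singleton k), poissonMeasure_singleton]
  exact M.N_poisson n k

lemma indepFun_X_X (M : Model d P) {i j : ℕ} (hi : 1 ≤ i) (hj : 1 ≤ j) (hij : i ≠ j) :
    IndepFun (M.X i) (M.X j) P :=
  M.X_indep.indepFun (i := ⟨i, hi⟩) (j := ⟨j, hj⟩) (by simpa using hij)

lemma indepFun_U_X (M : Model d P) (i j k l : ℕ) :
    IndepFun (M.U k l) (fun ω => (M.X i ω, M.X j ω)) P := by
  have hUX : IndepFun (fun ω (p : ℕ × ℕ) => M.U p.1 p.2 ω) (fun ω i => M.X i ω) P :=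
    M.families_indep.indep (i := 2) (j := 0) (by decide)
  exact hUX.comp (measurable_pi_apply (k, l))
    ((measurable_pi_apply i).prodMk (measurable_pi_apply j))

lemma ae_eventually_N_le (M : Model d P) : ∀ᵐ ω ∂P, ∀ᶠ n in atTop, M.N n ω ≤ 2 * n := by
  have hH : 0 < H 2 := by
    rw [H]
    linarith [Real.log_two_gt_d9]
  have htail (n : ℕ) : P {ω | 2 * n ≤ M.N n ω} ≤ ENNReal.ofReal (Real.exp (-H 2) ^ n) := by
    rw [(hasLaw_N M n).measure_eq (p := fun k => 2 * n ≤ k) (.of_discrete), ← Real.exp_nat_mul,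
      mul_neg]
    exact_mod_cast poissonMeasure_mul_le_le_exp_neg_H n one_le_two
  have hsum : Summable fun n : ℕ => Real.exp (-H 2) ^ n :=
    summable_geometric_of_lt_one (by positivity) (Real.exp_lt_one_iff.2 (neg_neg_of_pos hH))
  filter_upwards [ae_eventually_notMem (ne_top_of_le_ne_top hsum.tsum_ofReal_ne_top
    (ENNReal.tsum_le_tsum htail))] with ω hω
  exact hω.mono fun n hn => (not_le.1 hn).le

end Law

section LongEdge

/-- The event that, at scale `r`, the edge variable of the pair `i`, `j` would join these two points
even though they are more than `t * r` apart; whether `i` and `j` are among the `N_n` vertices is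
disregarded. -/
def longEdge (M : Model d P) (r t : ℝ) (i j : ℕ) : Set Ω :=
  {ω | M.U (min i j) (max i j) ω ≤ M.g (torusDist (M.X i ω) (M.X j ω) / r) ∧
    t * r < torusDist (M.X i ω) (M.X j ω)}

/-- The event that one of the pairs among the points `1, …, L` satisfies `longEdge`. -/
def existsLongEdge (M : Model d P) (r t : ℝ) (L : ℕ) : Set Ω :=
  ⋃ p ∈ (Finset.Icc 1 L).offDiag, longEdge M r t p.1 p.2

lemma longEdge_subset (M : Model d P) {b c K : ℝ} (hb : 0 ≤ b) (hK : 0 ≤ K)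
    (hg : ∀ s, 0 ≤ s → M.g s ≤ K * Real.exp (-(c * s))) {r : ℝ} (hr : 0 < r) (t : ℝ) (i j : ℕ) :
    longEdge M r t i j ⊆ {ω | M.U (min i j) (max i j) ω ≤ K * Real.exp (-(b * t)) *
      Real.exp (-(torusDist (M.X i ω) (M.X j ω) / (r / (c - b))))} := by
  rintro ω ⟨hU, ht⟩
  set D := torusDist (M.X i ω) (M.X j ω)
  have hD : 0 ≤ D := torusDist_nonneg _ _
  calc M.U (min i j) (max i j) ω ≤ K * Real.exp (-(c * (D / r))) :=
        hU.trans (hg _ (by positivity))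
    _ ≤ K * Real.exp (-(b * t) + -(D / (r / (c - b)))) := by
        have hbt : b * t ≤ b * (D / r) := by
          gcongr
          exact (le_div_iff₀ hr).2 ht.le
        gcongr
        rw [div_div_eq_mul_div]
        linarith [show D * (c - b) / r = c * (D / r) - b * (D / r) by ring]
    _ = _ := by rw [Real.exp_add, mul_assoc]

lemma exists_measure_longEdge_le [IsProbabilityMeasure P] (M : Model d P) {b c : ℝ} (hb : 0 ≤ b)
    (hbc : b < c) (hg : M.g =O[atTop] fun s : ℝ => Real.exp (-(c * s))) :
    ∃ C, 0 ≤ C ∧ ∀ r t : ℝ, 0 < r → ∀ i j, 1 ≤ i → 1 ≤ j → i ≠ j →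
      P (longEdge M r t i j) ≤ ENNReal.ofReal (C * (Real.exp (-(b * t)) * r ^ d)) := by
  obtain ⟨K, hK, hgK⟩ := exists_forall_nonneg_le_mul_exp_neg (hb.trans hbc.le)
    (fun s hs => (M.g_mem s hs).2) hg
  have hcb : 0 < c - b := sub_pos.2 hbc
  set I := ∫ x : EuclideanSpace ℝ (Fin d), Real.exp (-‖x‖)
  refine ⟨K * (3 ^ d * ((c - b)⁻¹ ^ d * I)), by positivity, fun r t hr i j hi hj hij => ?_⟩
  have hA : 0 ≤ K * Real.exp (-(b * t)) := by positivity
  have hdist := measurable_torusDist (d := d)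
  calc P (longEdge M r t i j)
      ≤ P {ω | M.U (min i j) (max i j) ω ≤ K * Real.exp (-(b * t)) *
          Real.exp (-(torusDist (M.X i ω) (M.X j ω) / (r / (c - b))))} :=
        measure_mono (longEdge_subset M hb hK hgK hr t i j)
    _ ≤ ∫⁻ ω, ENNReal.ofReal (K * Real.exp (-(b * t)) *
          Real.exp (-(torusDist (M.X i ω) (M.X j ω) / (r / (c - b))))) ∂P :=
        measure_le_comp_le_lintegral_ofReal (indepFun_U_X M i j _ _)
          (hasLaw_U M (le_min hi hj) (min_lt_max.2 hij))
          ((M.X_meas i).prodMk (M.X_meas j)).aemeasurable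
          (h := fun p => K * Real.exp (-(b * t)) * Real.exp (-(torusDist p.1 p.2 / (r / (c - b)))))
          (by fun_prop)
    _ = ENNReal.ofReal (K * Real.exp (-(b * t))) * ∫⁻ ω, ENNReal.ofReal
          (Real.exp (-(torusDist (M.X i ω) (M.X j ω) / (r / (c - b))))) ∂P := by
        simp_rw [ENNReal.ofReal_mul hA]
        exact lintegral_const_mul' _ _ ENNReal.ofReal_ne_top
    _ ≤ ENNReal.ofReal (K * Real.exp (-(b * t))) *
          ENNReal.ofReal (3 ^ d * ((r / (c - b)) ^ d * I)) := by
        gcongr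
        exact lintegral_exp_neg_torusDist_div_le (hasLaw_X M hi) (hasLaw_X M hj)
          (indepFun_X_X M hi hj hij) (div_pos hr hcb)
    _ = _ := by
        rw [← ENNReal.ofReal_mul hA]
        congr 1
        ring

lemma exists_measureReal_existsLongEdge_le [IsProbabilityMeasure P] (M : Model d P) {b c : ℝ}
    (hb : 0 ≤ b) (hbc : b < c) (hg : M.g =O[atTop] fun s : ℝ => Real.exp (-(c * s))) :
    ∃ C, ∀ r t : ℝ, 0 < r → ∀ L : ℕ,
      P.real (existsLongEdge M r t L) ≤ C * ((L : ℝ) ^ 2 * Real.exp (-(b * t)) * r ^ d) := by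
  obtain ⟨C, hC, hpair⟩ := exists_measure_longEdge_le M hb hbc hg
  refine ⟨C, fun r t hr L => ?_⟩
  have hB : 0 ≤ C * (Real.exp (-(b * t)) * r ^ d) := by positivity
  have hcard : (((Finset.Icc 1 L).offDiag.card : ℕ) : ℝ) ≤ (L : ℝ) ^ 2 := by
    rw [Finset.offDiag_card, Nat.card_Icc, Nat.add_sub_cancel, sq]
    exact_mod_cast Nat.sub_le _ _
  calc P.real (existsLongEdge M r t L)
      ≤ ∑ p ∈ (Finset.Icc 1 L).offDiag, P.real (longEdge M r t p.1 p.2) :=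
        measureReal_biUnion_finset_le _ _
    _ ≤ (Finset.Icc 1 L).offDiag.card * (C * (Real.exp (-(b * t)) * r ^ d)) := by
        rw [← nsmul_eq_mul]
        refine Finset.sum_le_card_nsmul _ _ _ fun p hp => ?_
        simp only [Finset.mem_offDiag, Finset.mem_Icc] at hp
        exact ENNReal.toReal_le_of_le_ofReal hB (hpair r t hr p.1 p.2 hp.1.1 hp.2.1.1 hp.2.2)
    _ ≤ (L : ℝ) ^ 2 * (C * (Real.exp (-(b * t)) * r ^ d)) := by gcongr
    _ = C * ((L : ℝ) ^ 2 * Real.exp (-(b * t)) * r ^ d) := by ring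

lemma longestEdge_nonneg (M : Model d P) (n : ℕ) (r : ℝ) (ω : Ω) : 0 ≤ longestEdge M n r ω := by
  refine Real.sSup_nonneg ?_
  rintro s (rfl | ⟨i, j, -, rfl⟩)
  · exact le_rfl
  · exact torusDist_nonneg _ _

lemma longestEdge_le (M : Model d P) {n : ℕ} {r t : ℝ} {ω : Ω} (ht : 0 ≤ t)
    (h : ∀ i j, adj M n r ω i j → torusDist (M.X i ω) (M.X j ω) ≤ t) :
    longestEdge M n r ω ≤ t := by
  refine csSup_le ⟨0, Or.inl rfl⟩ ?_
  rintro s (rfl | ⟨i, j, hij, rfl⟩)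
  · exact ht
  · exact h i j hij

lemma longestEdge_le_of_notMem_existsLongEdge (M : Model d P) {n L : ℕ} {r s t : ℝ} {ω : Ω}
    (hs : 0 < s) (hsr : s ≤ r) (ht : 0 ≤ t) (hN : M.N n ω ≤ L)
    (hω : ω ∉ existsLongEdge M r t L) : longestEdge M n s ω ≤ t * r := by
  have hr := hs.trans_le hsr
  refine longestEdge_le M (by positivity) ?_
  rintro i j ⟨hij, hi, hj, hiN, hjN, hU⟩
  contrapose! hω
  have hD := torusDist_nonneg (M.X i ω) (M.X j ω)
  have hmem : ω ∈ longEdge M r t i j := by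
    refine ⟨hU.trans (M.g_antitone (div_nonneg hD hr.le) (div_nonneg hD hs.le) ?_), hω⟩
    gcongr
  refine mem_biUnion (x := (i, j)) ?_ hmem
  simp only [Finset.coe_offDiag, Finset.coe_Icc, mem_offDiag, mem_Icc]
  exact ⟨⟨hi, hiN.trans hN⟩, ⟨hj, hjN.trans hN⟩, hij⟩

end LongEdge

section Radius

lemma rhat_nonneg (M : Model d P) {γ : ℝ} (hγ : 0 ≤ γ) (n : ℕ) : 0 ≤ rhat M γ n := by
  have hα := M.α_pos
  rw [rhat]
  positivity

lemma rhat_pos (M : Model d P) {γ : ℝ} (hγ : 0 < γ) {n : ℕ} (hn : 2 ≤ n) : 0 < rhat M γ n := by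
  have hα := M.α_pos
  have hlog : 0 < Real.log n := Real.log_pos (by exact_mod_cast hn)
  exact Real.rpow_pos_of_pos (by positivity) _

lemma rhat_pow (M : Model d P) {γ : ℝ} (hγ : 0 ≤ γ) (hd : d ≠ 0) (n : ℕ) :
    rhat M γ n ^ d = γ / M.α * (Real.log n / n) := by
  have hα := M.α_pos
  rw [rhat, one_div, Real.rpow_inv_natCast_pow (by positivity) hd, mul_div_mul_comm]

lemma rhat_le_rhat (M : Model d P) {γ : ℝ} (hγ : 0 ≤ γ) {m n : ℕ} (hm : 3 ≤ m) (hmn : m ≤ n) :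
    rhat M γ n ≤ rhat M γ m := by
  have hα := M.α_pos
  have he : Real.exp 1 ≤ m := by
    have : (3 : ℝ) ≤ m := by exact_mod_cast hm
    linarith [Real.exp_one_lt_d9]
  have hmn' : (m : ℝ) ≤ n := by exact_mod_cast hmn
  have hanti := Real.log_div_self_antitoneOn he (he.trans hmn') hmn'
  rw [rhat, rhat, mul_div_mul_comm, mul_div_mul_comm]
  gcongr

lemma rhat_le_mul_rhat (M : Model d P) (hd : d ≠ 0) {γ : ℝ} (hγ : 0 ≤ γ) {m n : ℕ} (hm : 1 ≤ m)
    (hmn : m ≤ n) {l : ℝ} (hl : 1 ≤ l) (hnm : (n : ℝ) ≤ l * m) :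
    rhat M γ m ≤ l * rhat M γ n := by
  have hn₀ : (0 : ℝ) < n := by exact_mod_cast hm.trans hmn
  have hα := M.α_pos
  have hlog : Real.log m / m ≤ l ^ d * (Real.log n / n) := by
    calc Real.log m / m ≤ Real.log n / (n / l) := by
          gcongr
          rwa [div_le_iff₀' (by positivity)]
      _ = l * (Real.log n / n) := by rw [div_div_eq_mul_div, mul_comm, mul_div_assoc]
      _ ≤ l ^ d * (Real.log n / n) := by
          gcongr
          exact le_self_pow₀ hl hd
  refine le_of_pow_le_pow_left₀ hd (mul_nonneg (by positivity) (rhat_nonneg M hγ n)) ?_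
  rw [mul_pow, rhat_pow M hγ hd, rhat_pow M hγ hd, mul_left_comm (l ^ d)]
  gcongr

end Radius

lemma exists_measureReal_existsLongEdge_isBigO_rpow (hd : d ≠ 0) [IsProbabilityMeasure P]
    (M : Model d P) {a c γ : ℝ} (hc : 0 < c) (ha : 1 / c < a)
    (hg : M.g =O[atTop] fun s : ℝ => Real.exp (-(c * s))) (hγ : 0 < γ) :
    ∃ ε : ℝ, 0 < ε ∧ (fun n : ℕ => P.real (existsLongEdge M (rhat M γ n) (a * Real.log n) (4 * n)))
      =O[atTop] fun n : ℕ => (n : ℝ) ^ (-ε) := by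
  have ha₀ : 0 < a := lt_trans (by positivity) ha
  obtain ⟨b, hab, hbc⟩ := exists_between ((one_div_lt hc ha₀).1 ha)
  have hb : 0 < b := lt_trans (by positivity) hab
  rw [div_lt_iff₀ ha₀] at hab
  obtain ⟨C, hbound⟩ := exists_measureReal_existsLongEdge_le M hb.le hbc hg
  refine ⟨(b * a - 1) / 2, by linarith, ?_⟩
  refine .trans (.of_bound (C * (16 * (γ / M.α))) ?_)
    (natCast_rpow_mul_log_isBigO_rpow (u := 1 - b * a) (by linarith))
  filter_upwards [eventually_ge_atTop 2] with n hn
  have hn₀ : (0 : ℝ) < n := by positivity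
  rw [Real.norm_of_nonneg measureReal_nonneg, Real.norm_of_nonneg (by positivity)]
  calc P.real (existsLongEdge M (rhat M γ n) (a * Real.log n) (4 * n))
      ≤ C * (((4 * n : ℕ) : ℝ) ^ 2 * Real.exp (-(b * (a * Real.log n))) * rhat M γ n ^ d) :=
        hbound _ _ (rhat_pos M hγ hn) _
    _ = C * (16 * (γ / M.α)) * (n * (n : ℝ) ^ (-(b * a)) * Real.log n) := by
        rw [rhat_pow M hγ.le hd, Real.rpow_def_of_pos hn₀, Nat.cast_mul, Nat.cast_ofNat]
        field_simp
        ring_nf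
    _ = C * (16 * (γ / M.α)) * ((n : ℝ) ^ (1 - b * a) * Real.log n) := by
        rw [sub_eq_add_neg, Real.rpow_one_add' hn₀.le]
        linarith

lemma ae_eventually_longestEdge_le (hd : d ≠ 0) [IsProbabilityMeasure P] (M : Model d P)
    {a c γ : ℝ} (hc : 0 < c) (ha : 1 / c < a)
    (hg : M.g =O[atTop] fun s : ℝ => Real.exp (-(c * s))) (hγ : 0 < γ) :
    ∀ᵐ ω ∂P, ∀ᶠ n : ℕ in atTop,
      longestEdge M n (rhat M γ n) ω / (rhat M γ n * Real.log n) ≤ a := by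
  obtain ⟨b, hb, hba⟩ := exists_between ha
  have hb₀ : 0 < b := lt_trans (by positivity) hb
  obtain ⟨ε, hε, hbigO⟩ := exists_measureReal_existsLongEdge_isBigO_rpow hd M hc hb hg hγ
  have hl : 1 < min (a / b) 2 := lt_min ((one_lt_div hb₀).2 hba) one_lt_two
  filter_upwards [ae_eventually_exists_notMem_of_isBigO hε hl hbigO, ae_eventually_N_le M]
    with ω hω hN
  filter_upwards [hω, hN, eventually_ge_atTop 6] with n ⟨q, hqn, hnq, hnot⟩ hNn hn
  have hn_le : n ≤ 2 * q := by
    exact_mod_cast hnq.trans (mul_le_mul_of_nonneg_right (min_le_right _ _) q.cast_nonneg)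
  have hnq' : (n : ℝ) ≤ a / b * q :=
    hnq.trans (mul_le_mul_of_nonneg_right (min_le_left _ _) q.cast_nonneg)
  have hrn := rhat_pos M hγ (show 2 ≤ n by omega)
  have hlogn : 0 < Real.log n := Real.log_pos (by exact_mod_cast (show 1 < n by omega))
  rw [div_le_iff₀ (by positivity)]
  calc longestEdge M n (rhat M γ n) ω ≤ b * Real.log q * rhat M γ q :=
        longestEdge_le_of_notMem_existsLongEdge M hrn (rhat_le_rhat M hγ.le (by omega) hqn)
          (by positivity) (by omega) hnot
    _ ≤ b * Real.log n * (a / b * rhat M γ n) := by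
        have hq : (0 : ℝ) < q := by exact_mod_cast (show 0 < q by omega)
        have := rhat_nonneg M hγ.le q
        gcongr
        exact rhat_le_mul_rhat M hd hγ.le (by omega) hqn ((one_le_div hb₀).2 hba.le) hnq'
    _ = a * (rhat M γ n * Real.log n) := by field_simp

theorem longestEdge_limsup_le_general (hd : d ≠ 0) [IsProbabilityMeasure P] (M : Model d P)
    {c : ℝ} (hc : 0 < c) (hg : M.g =O[atTop] fun r : ℝ => Real.exp (-(c * r)))
    {γ : ℝ} (hγ : 0 < γ) :
    ∀ᵐ ω ∂P, limsup
      (fun n : ℕ => longestEdge M n (rhat M γ n) ω / (rhat M γ n * Real.log n))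
        atTop ≤ 1 / c :=
  ae_limsup_le_of_forall_gt
    (fun n ω => div_nonneg (longestEdge_nonneg M n _ ω)
      (mul_nonneg (rhat_nonneg M hγ.le n) (Real.log_natCast_nonneg n)))
    fun _ ha => ae_eventually_longestEdge_le hd M hc ha hg hγ

/-- Proposition 3, (pe3): a.s. `limsup L_n(γ)/(r̂_n(γ) log n) ≤ 1/c`. -/
theorem longestEdge_limsup_le (hd : 2 ≤ d) [IsProbabilityMeasure P] (M : Model d P)
    {c : ℝ} (hc : 0 < c)
    (hg : M.g =o[atTop] fun r : ℝ => Real.exp (-(c * r)))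
    {γ : ℝ} (hγ : 0 < γ) :
    ∀ᵐ ω ∂P, Filter.limsup
      (fun n : ℕ => longestEdge M n (rhat M γ n) ω / (rhat M γ n * Real.log n))
        atTop ≤ 1 / c :=
  longestEdge_limsup_le_general (by omega) M hc hg.isBigO hγ

end RCM
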